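/- arXiv:1810.06024 — 3 statements merged into one kernel-verified Lean document; each statement's English description precedes it below -/
import Mathlib

section
/- Let $G$ be a finite abelian group with Pontryagin dual $\widehat{G} = \mathrm{Hom}(G, \mathbb{Q}/\mathbb{Z})$. Then there is a canonical isomorphism $H^3(G, \mathbb{Z}) \cong \mathrm{Hom}(\wedge^2 G, \mathbb{Q}/\mathbb{Z})$, where $\mathbb{Z}$ carries the trivial action and $\wedge^2 G$ is the exterior square of $G$ as a $\mathbb{Z}$-module. -/
/-!
The isomorphism is the composite
`H³(G, ℤ) ≅ H²(G, ℚ/ℤ) ≅ {alternating bilinear maps G × G → ℚ/ℤ} ≅ Hom(⋀² G, ℚ/ℤ)`.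

The first arrow is the inverse of the connecting map of `0 → ℤ → ℚ → ℚ/ℤ → 0`. That map is
bijective because `Hⁿ⁺¹(G, ℚ) = 0` for finite `G`: averaging a cocycle over its last variable gives
an explicit primitive (`exists_primitive`, `isZero_rat`).

The second arrow exists for every divisible abelian group `M` in place of `ℚ/ℤ`. A 2-cocycle `f`
is sent to `(x, y) ↦ f (x, y) - f (y, x)`, which is bilinear by the cocycle identity and alternating
(`antisymm`). If it vanishes, `f` is symmetric and makes `M × G` into an abelian extension of `G` by
`M`; it splits because `M` is an injective `ℤ`-module, so `f` is a coboundary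
(`exists_primitive_of_symm`). The map is onto because `G` is a sum of cyclic groups: keeping only
the components `i < j` of an alternating form `b` gives a bilinear map, in particular a cocycle,
whose antisymmetrization is `b` (`exists_bilinear_of_alternating`).

The third arrow is the universal property of the exterior square.
-/
open CategoryTheory

namespace HThree

/-! ### Vanishing of rational cohomology -/

section Average
variable {G : Type} {n : ℕ}

lemma contractNth_castSucc_snoc [CommGroup G] (g : Fin (n + 1) → G) (x : G) (j : Fin n) :
    Fin.contractNth j.castSucc.castSucc (· * ·) (Fin.snoc g x : Fin (n + 2) → G) =
      (Fin.snoc (Fin.contractNth j.castSucc (· * ·) g) x : Fin (n + 1) → G) := by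
  funext k
  induction k using Fin.lastCases with
  | last =>
    rw [Fin.snoc_last, Fin.contractNth_apply_of_gt _ _ _ _ (by simp), Fin.succ_last, Fin.snoc_last]
  | cast k =>
    rw [Fin.snoc_castSucc]
    simp only [Fin.contractNth, Fin.val_castSucc, Fin.succ_castSucc, Fin.snoc_castSucc]

/-- Contracting the last pair of `(g, x)` merges the last entry of `g` with `x`; this agrees with
dropping the last entry of `g` and appending the product. -/
lemma contractNth_last_snoc [CommGroup G] (g : Fin (n + 1) → G) (x : G) :
    Fin.contractNth (Fin.last n).castSucc (· * ·) (Fin.snoc g x : Fin (n + 2) → G) =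
      (Fin.snoc (Fin.contractNth (Fin.last n) (· * ·) g) (g (Fin.last n) * x) :
        Fin (n + 1) → G) := by
  funext k
  induction k using Fin.lastCases with
  | last =>
    rw [Fin.snoc_last, Fin.contractNth_apply_of_eq _ _ _ _ (by simp), Fin.succ_last, Fin.snoc_last,
      Fin.snoc_castSucc]
  | cast k =>
    rw [Fin.snoc_castSucc, Fin.contractNth_apply_of_lt _ _ _ _ (by simp),
      Fin.contractNth_apply_of_lt _ _ _ _ (by simp), Fin.snoc_castSucc]

lemma contractNth_last_last_snoc [CommGroup G] (g : Fin (n + 1) → G) (x : G) :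
    Fin.contractNth (Fin.last (n + 1)) (· * ·) (Fin.snoc g x : Fin (n + 2) → G) = g := by
  funext k
  rw [Fin.contractNth_apply_of_lt _ _ _ _ (by simpa using Nat.lt_succ_iff.1 k.2),
    Fin.snoc_castSucc]

/-- Summing over the appended entry commutes with every contraction of `g`; in the boundary case
`j = n` this is translation invariance of the sum over `G`. -/
lemma sum_contractNth_snoc [CommGroup G] [Fintype G] (f : (Fin (n + 1) → G) → ℚ) (g : Fin (n + 1) → G) (j : Fin (n + 1)) :
    ∑ x, f (Fin.contractNth j.castSucc (· * ·) (Fin.snoc g x : Fin (n + 2) → G)) =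
      ∑ x, f (Fin.snoc (Fin.contractNth j (· * ·) g) x) := by
  induction j using Fin.lastCases with
  | last =>
    simp_rw [contractNth_last_snoc]
    exact Equiv.sum_comp (Equiv.mulLeft (g (Fin.last n)))
      fun x => f (Fin.snoc (Fin.contractNth (Fin.last n) (· * ·) g) x)
  | cast j => simp_rw [contractNth_castSucc_snoc]

lemma snoc_succ (g : Fin (n + 1) → G) (x : G) :
    (fun i : Fin (n + 1) => (Fin.snoc g x : Fin (n + 2) → G) i.succ) =
      (Fin.snoc (fun i : Fin n => g i.succ) x : Fin (n + 1) → G) := by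
  funext k
  induction k using Fin.lastCases with
  | last => rw [Fin.snoc_last, Fin.succ_last, Fin.snoc_last]
  | cast k => rw [Fin.snoc_castSucc, Fin.succ_castSucc, Fin.snoc_castSucc]

/-- A rational cocycle `f` on a finite group is, up to sign, the coboundary of its average over the
last variable: sum the identity `d f (g, x) = 0` over `x`. -/
lemma exists_primitive [CommGroup G] [Fintype G] (f : (Fin (n + 1) → G) → ℚ)
    (hf : inhomogeneousCochains.d (Rep.trivial ℤ G ℚ) (n + 1) f = 0) :
    ∃ h : (Fin n → G) → ℚ, inhomogeneousCochains.d (Rep.trivial ℤ G ℚ) n h = f := by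
  have hcard : (Fintype.card G : ℚ) ≠ 0 := by simp
  refine ⟨fun g => (-1) ^ (n + 1) / Fintype.card G * ∑ x, f (Fin.snoc g x), ?_⟩
  funext g
  have key : ∀ x, f (Fin.snoc (fun i : Fin n => g i.succ) x) +
      (∑ j : Fin (n + 1), (-1 : ℚ) ^ ((j : ℕ) + 1) *
        f (Fin.contractNth j.castSucc (· * ·) (Fin.snoc g x : Fin (n + 2) → G)) +
        (-1 : ℚ) ^ (n + 2) * f g) = 0 := by
    intro x
    have := congrFun hf (Fin.snoc g x : Fin (n + 2) → G)
    rw [inhomogeneousCochains.d_hom_apply, Fin.sum_univ_castSucc] at this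
    change _ = (0 : ℚ) at this
    simpa [snoc_succ, contractNth_last_last_snoc, Representation.trivial] using this
  have key2 := Finset.sum_congr (rfl : (Finset.univ : Finset G) = _) fun x _ => key x
  rw [Finset.sum_add_distrib, Finset.sum_add_distrib, Finset.sum_comm] at key2
  simp_rw [← Finset.mul_sum, sum_contractNth_snoc] at key2
  rw [inhomogeneousCochains.d_hom_apply]
  simp only [Representation.trivial, MonoidHom.one_apply, Module.End.one_apply, zsmul_eq_mul]
  push_cast
  simp_rw [mul_left_comm _ ((-1 : ℚ) ^ (n + 1) / _), ← Finset.mul_sum]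
  rw [← mul_add]
  simp only [Finset.sum_const, Finset.card_univ, nsmul_eq_mul, mul_zero] at key2
  field_simp
  have e : ((-1 : ℚ) ^ (n + 1)) * (-1 : ℚ) ^ (n + 2) = -1 := by
    rw [← pow_add]; exact Odd.neg_one_pow ⟨n + 1, by ring⟩
  linear_combination (-1 : ℚ) ^ (n + 1) * key2 - (Fintype.card G) * f g * e

lemma isZero_rat (G : Type) [CommGroup G] [Fintype G] (n : ℕ) : Limits.IsZero (groupCohomology (Rep.trivial ℤ G ℚ) (n + 1)) := by
  rw [show groupCohomology (Rep.trivial ℤ G ℚ) (n + 1) =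
    (groupCohomology.inhomogeneousCochains (Rep.trivial ℤ G ℚ)).homology (n + 1) from rfl,
    ← HomologicalComplex.exactAt_iff_isZero_homology,
    HomologicalComplex.exactAt_iff' _ n (n + 1) (n + 2) (by simp) (by simp),
    ShortComplex.moduleCat_exact_iff]
  intro f hf
  obtain ⟨h, hh⟩ := exists_primitive f
    (by rw [← groupCohomology.inhomogeneousCochains.d_def]; exact hf)
  refine ⟨h, ?_⟩
  rw [← hh, ← groupCohomology.inhomogeneousCochains.d_def]
  rfl


end Average
/-! ### Symmetric cocycles with divisible coefficients -/

section Extension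

variable {G M : Type} [CommGroup G] [AddCommGroup M]

lemma cocycle_one {f : G × G → M}
    (hc : ∀ g h j, f (g * h, j) + f (g, h) = f (h, j) + f (g, h * j)) (g : G) :
    f (1, g) = f (1, 1) := by
  simpa using (hc 1 1 g).symm

/-- The abelian extension of `G` by `M` attached to a symmetric 2-cocycle `f`: the set `M × G` with
`(m, g) + (m', g') = (m + m' + f (g, g'), g * g')`. The cocycle is not assumed normalized, so the
zero element is `(-f (1, 1), 1)`. -/
abbrev twistedProd (f : G × G → M)
    (hc : ∀ g h j, f (g * h, j) + f (g, h) = f (h, j) + f (g, h * j))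
    (hs : ∀ g h, f (g, h) = f (h, g)) : AddCommGroup (M × G) :=
  letI : Add (M × G) := ⟨fun x y => (x.1 + y.1 + f (x.2, y.2), x.2 * y.2)⟩
  letI : Zero (M × G) := ⟨(-f (1, 1), 1)⟩
  letI : Neg (M × G) := ⟨fun x => (-x.1 - f (x.2⁻¹, x.2) - f (1, 1), x.2⁻¹)⟩
  { AddGroup.ofLeftAxioms (G := M × G)
      (fun x y z => Prod.ext
        (show x.1 + y.1 + f (x.2, y.2) + z.1 + f (x.2 * y.2, z.2) =
            x.1 + (y.1 + z.1 + f (y.2, z.2)) + f (x.2, y.2 * z.2) by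
          have e : x.1 + y.1 + f (x.2, y.2) + z.1 + f (x.2 * y.2, z.2) =
            x.1 + y.1 + z.1 + (f (x.2 * y.2, z.2) + f (x.2, y.2)) := by abel
          rw [e, hc]; abel) (mul_assoc _ _ _))
      (fun x => Prod.ext
        (show -f (1, 1) + x.1 + f (1, x.2) = x.1 by
          rw [cocycle_one hc x.2]; abel) (one_mul _))
      (fun x => Prod.ext
        (show -x.1 - f (x.2⁻¹, x.2) - f (1, 1) + x.1 + f (x.2⁻¹, x.2) = -f (1, 1) by abel)
        (inv_mul_cancel _)) with
    add_comm := fun x y => Prod.ext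
      (show x.1 + y.1 + f (x.2, y.2) = y.1 + x.1 + f (y.2, x.2) by rw [hs x.2, add_comm x.1])
      (mul_comm _ _) }

/-- A symmetric 2-cocycle with values in a divisible group is a coboundary, since the abelian
extension it defines splits. -/
lemma exists_primitive_of_symm [DivisibleBy M ℤ] (f : G × G → M)
    (hc : ∀ g h j, f (g * h, j) + f (g, h) = f (h, j) + f (g, h * j))
    (hs : ∀ g h, f (g, h) = f (h, g)) :
    ∃ φ : G → M, ∀ g h, φ h - φ (g * h) + φ g = f (g, h) := by
  let _ := twistedProd f hc hs
  have add_def (x y : M × G) : x + y = (x.1 + y.1 + f (x.2, y.2), x.2 * y.2) := rfl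
  -- The shift by `f (1, 1)` compensates for `f` not being normalized.
  let i : M →+ M × G := AddMonoidHom.mk' (fun m => (m - f (1, 1), 1)) fun a b => by
    rw [add_def]
    exact Prod.ext (by simp only; abel) (mul_one _).symm
  have hi : Function.Injective i := fun a b hab => sub_left_injective (congrArg Prod.fst hab)
  obtain ⟨r, hr⟩ := (Module.Baer.of_divisible M).extension_property_addMonoidHom i hi
    (AddMonoidHom.id M)
  have hr' (m : M) : r (i m) = m := DFunLike.congr_fun hr m
  refine ⟨fun g => r (0, g), fun g h => ?_⟩
  have e : ((0, g) : M × G) + (0, h) = i (f (g, h)) + (0, g * h) := by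
    rw [add_def, add_def]
    refine Prod.ext ?_ (one_mul _).symm
    change 0 + 0 + f (g, h) = f (g, h) - f (1, 1) + 0 + f (1, g * h)
    rw [cocycle_one hc (g * h)]; abel
  have := congrArg r e
  rw [map_add, map_add, hr'] at this
  rw [sub_add_eq_add_sub, add_comm, this]; abel

end Extension
/-! ### Alternating forms on finite abelian groups -/

section Alt
open scoped DirectSum

/-- The identity of a finite abelian group is a finite sum of endomorphisms with cyclic image. -/
lemma exists_cyclic_projections (A : Type) [AddCommGroup A] [Finite A] :
    ∃ (ι : Type) (_ : Fintype ι) (_ : LinearOrder ι) (p : ι → A →+ A),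
      (∀ x, ∑ i, p i x = x) ∧ ∀ i, ∃ z, ∀ x, ∃ m : ℤ, p i x = m • z := by
  classical
  obtain ⟨ι, hι, q, -, e, ⟨E⟩⟩ := AddCommGroup.equiv_directSum_zmod_of_finite A
  let pr (i : ι) : A →+ ZMod (q i ^ e i) := (DFinsupp.evalAddMonoidHom i).comp E.toAddMonoidHom
  let inj (i : ι) : ZMod (q i ^ e i) →+ A :=
    E.symm.toAddMonoidHom.comp (DirectSum.of (fun i => ZMod (q i ^ e i)) i)
  refine ⟨ι, hι, LinearOrder.lift' (Fintype.equivFin ι) (Fintype.equivFin ι).injective,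
    fun i => (inj i).comp (pr i), fun x => ?_, fun i => ⟨inj i 1, fun x => ?_⟩⟩
  · apply E.injective
    rw [map_sum]
    simp only [pr, inj, AddMonoidHom.comp_apply, AddEquiv.coe_toAddMonoidHom,
      AddEquiv.apply_symm_apply]
    exact DirectSum.sum_univ_of (E x)
  · obtain ⟨m, hm⟩ := ZMod.intCast_surjective (pr i x)
    refine ⟨m, ?_⟩
    rw [AddMonoidHom.comp_apply, ← hm, ← map_zsmul]
    simp

/-- Every alternating form `b` on a finite abelian group is the antisymmetrization of a bilinear
form, namely of the part of `b` strictly above the diagonal with respect to a decomposition into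
cyclic groups. The diagonal part of `b` vanishes because the summands are cyclic. -/
lemma exists_bilinear_of_alternating {A M : Type} [AddCommGroup A] [Finite A] [AddCommGroup M]
    (b : A →+ A →+ M) (hb : ∀ x, b x x = 0) :
    ∃ c : A →+ A →+ M, ∀ x y, c x y - c y x = b x y := by
  obtain ⟨ι, _, _, p, hp, hz⟩ := exists_cyclic_projections A
  have anti (x y : A) : b x y = - b y x := by
    have := hb (x + y)
    simp only [map_add, AddMonoidHom.add_apply, hb, zero_add, add_zero] at this
    exact eq_neg_of_add_eq_zero_right this
  have diag (i : ι) (x y : A) : b (p i x) (p i y) = 0 := by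
    obtain ⟨z, h⟩ := hz i
    obtain ⟨m, hm⟩ := h x
    obtain ⟨n, hn⟩ := h y
    simp [hm, hn, hb]
  refine ⟨∑ i, ∑ j, if i < j then (b.comp (p i)).compl₂ (p j) else 0, fun x y => ?_⟩
  have ev (x y : A) : (∑ i, ∑ j, if i < j then (b.comp (p i)).compl₂ (p j) else 0 : A →+ A →+ M) x y
      = ∑ i, ∑ j, if i < j then b (p i x) (p j y) else 0 := by
    simp only [AddMonoidHom.finsetSum_apply]
    refine Finset.sum_congr rfl fun i _ => Finset.sum_congr rfl fun j _ => ?_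
    split_ifs <;> rfl
  rw [ev, ev, Finset.sum_comm (f := fun i j => if i < j then b (p i y) (p j x) else 0)]
  conv_rhs => rw [← hp x, ← hp y]
  simp only [map_sum, AddMonoidHom.finsetSum_apply, ← Finset.sum_sub_distrib]
  rw [Finset.sum_comm]
  refine Finset.sum_congr rfl fun i _ => Finset.sum_congr rfl fun j _ => ?_
  rcases lt_trichotomy i j with h | rfl | h
  · simp [h, h.not_gt, anti (p i y)]
  · simp [diag]
  · simp [h, h.not_gt, anti (p j x)]
end Alt

/-! ### Second cohomology and alternating forms -/

section HTwo
open groupCohomology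

variable {G M : Type} [CommGroup G] [AddCommGroup M]

lemma cocycle_trivial (f : cocycles₂ (Rep.trivial ℤ G M)) (g h j : G) :
    f.1 (g * h, j) + f.1 (g, h) = f.1 (h, j) + f.1 (g, h * j) :=
  (mem_cocycles₂_iff f.1).1 f.2 g h j

/-- The antisymmetrization of a 2-cocycle is additive in the first variable. -/
lemma cocycle_antisymm_mul (f : cocycles₂ (Rep.trivial ℤ G M)) (g h j : G) :
    f.1 (g * h, j) - f.1 (j, g * h) =
      (f.1 (g, j) - f.1 (j, g)) + (f.1 (h, j) - f.1 (j, h)) := by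
  have e1 := cocycle_trivial f g h j
  have e2 := cocycle_trivial f j g h
  have e3 := cocycle_trivial f g j h
  rw [mul_comm j g] at e2
  rw [mul_comm j h] at e3
  generalize f.1 (g * h, j) = a₁ at *
  generalize f.1 (g * j, h) = a₂ at *
  generalize f.1 (j, g * h) = a₃ at *
  generalize f.1 (g, h * j) = a₄ at *
  generalize f.1 (g, h) = b₁ at *
  generalize f.1 (h, j) = b₂ at *
  generalize f.1 (j, g) = b₃ at *
  generalize f.1 (g, j) = b₄ at *
  generalize f.1 (j, h) = b₅ at *
  change (a₁ : M) - a₃ = (b₄ - b₃) + (b₂ - b₅)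
  change (a₁ : M) + b₁ = b₂ + a₄ at e1
  change (a₂ : M) + b₃ = b₁ + a₃ at e2
  change (a₂ : M) + b₄ = b₅ + a₄ at e3
  rw [← sub_eq_zero] at *
  -- The cocycle identities at `(g, h, j)`, `(j, g, h)`, `(g, j, h)` with signs `+`, `+`, `-`.
  calc _ = (a₁ + b₁ - (b₂ + a₄)) + (a₂ + b₃ - (b₁ + a₃)) - (a₂ + b₄ - (b₅ + a₄)) := by abel
    _ = 0 := by rw [e1, e2, e3]; simp

/-- A biadditive map vanishing on the diagonal, as an alternating `ℤ`-multilinear map. -/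
def altOfBilin {A : Type} [AddCommGroup A] (b : A →+ A →+ M) (hb : ∀ x, b x x = 0) :
    A [⋀^Fin 2]→ₗ[ℤ] M where
  toFun v := b (v 0) (v 1)
  map_update_add' v i x y := by
    fin_cases i <;> simp [Function.update]
  map_update_smul' v i n x := by
    fin_cases i <;> simp [Function.update]
  map_eq_zero_of_eq' v i j h hij := by
    fin_cases i <;> fin_cases j <;> simp_all

/-- The biadditive map `(x, y) ↦ f (x, y) - f (y, x)` attached to a 2-cocycle `f`. -/
def antisymmHom (f : cocycles₂ (Rep.trivial ℤ G M)) : Additive G →+ Additive G →+ M :=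
  AddMonoidHom.mk' (fun x => AddMonoidHom.mk'
    (fun y => (f.1 (x.toMul, y.toMul) - f.1 (y.toMul, x.toMul) : M)) fun y z => by
      have := congrArg Neg.neg (cocycle_antisymm_mul f y.toMul z.toMul x.toMul)
      rw [neg_sub, neg_add, neg_sub, neg_sub] at this
      exact this) fun y z => by
    exact AddMonoidHom.ext fun x : Additive G => cocycle_antisymm_mul f y.toMul z.toMul x.toMul

variable (G M) in
/-- Antisymmetrization of 2-cocycles, as a linear map to alternating forms on `G`. -/
def antisymm : cocycles₂ (Rep.trivial ℤ G M) →ₗ[ℤ] (Additive G) [⋀^Fin 2]→ₗ[ℤ] M where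
  toFun f := altOfBilin (antisymmHom f) fun (x : Additive G) =>
    (sub_self (f.1 (x.toMul, x.toMul)) : _ = (0 : M))
  map_add' f g := by
    ext v
    exact add_sub_add_comm (f.1 _) (g.1 _) (f.1 _) (g.1 _)
  map_smul' n f := by
    ext v
    exact (smul_sub n (f.1 _) (f.1 _)).symm

lemma antisymm_apply (f : cocycles₂ (Rep.trivial ℤ G M)) (v : Fin 2 → Additive G) :
    antisymm G M f v = (f.1 ((v 0).toMul, (v 1).toMul) - f.1 ((v 1).toMul, (v 0).toMul) : M) := rfl

/-- Bilinear maps are cocycles, so it suffices to antisymmetrize bilinear maps. -/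
lemma antisymm_surjective [Finite G] :
    Function.Surjective (antisymm G M) := by
  intro φ
  let b : Additive G →+ Additive G →+ M :=
    AddMonoidHom.mk' (fun x => AddMonoidHom.mk' (fun y => φ ![x, y]) fun y z =>
      (φ.curryLeft x).map_vecCons_add ![] y z) fun y z => by
      ext x
      exact φ.map_vecCons_add ![x] y z
  have hb (x : Additive G) : b x x = 0 :=
    φ.map_eq_zero_of_eq ![x, x] (i := 0) (j := 1) rfl (by decide)
  obtain ⟨c, hc⟩ := exists_bilinear_of_alternating b hb
  refine ⟨⟨fun x => c (.ofMul x.1) (.ofMul x.2), (mem_cocycles₂_iff _).2 fun g h j => ?_⟩, ?_⟩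
  · change c (.ofMul g + .ofMul h) (.ofMul j) + c (.ofMul g) (.ofMul h) =
      c (.ofMul h) (.ofMul j) + c (.ofMul g) (.ofMul h + .ofMul j)
    simp only [map_add, AddMonoidHom.add_apply]
    abel
  · ext v
    exact (hc (v 0) (v 1)).trans (congrArg φ (by ext i; fin_cases i <;> rfl))

lemma antisymm_eq_zero_iff [DivisibleBy M ℤ] (f : cocycles₂ (Rep.trivial ℤ G M)) :
    antisymm G M f = 0 ↔ ⇑f ∈ coboundaries₂ (Rep.trivial ℤ G M) := by
  constructor
  · intro h
    obtain ⟨φ, hφ⟩ := exists_primitive_of_symm (M := M) f.1 (cocycle_trivial f) fun x y =>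
      sub_eq_zero.1 (DFunLike.congr_fun h ![Additive.ofMul x, Additive.ofMul y])
    exact ⟨φ, funext fun x => hφ x.1 x.2⟩
  · rintro ⟨φ, hφ⟩
    have hf (x y : G) : f.1 (x, y) = (φ y - φ (x * y) + φ x : M) := (congrFun hφ (x, y)).symm
    ext v
    rw [antisymm_apply, hf, hf, mul_comm]
    change (_ : M) = 0
    abel

/-- For `M` divisible with trivial action, `H²(G, M)` is isomorphic to the group of alternating
forms on `G` with values in `M`: both are quotients of the 2-cocycles by the coboundaries. -/
noncomputable def h2Equiv (G M : Type) [CommGroup G] [Finite G] [AddCommGroup M]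
    [DivisibleBy M ℤ] :
    groupCohomology (Rep.trivial ℤ G M) 2 ≃ₗ[ℤ] (Additive G) [⋀^Fin 2]→ₗ[ℤ] M :=
  have hπ : Function.Surjective (H2π (Rep.trivial ℤ G M)).hom :=
    (ModuleCat.epi_iff_surjective _).1 inferInstance
  have hker : LinearMap.ker (H2π (Rep.trivial ℤ G M)).hom =
      LinearMap.ker (antisymm G M) := by
    ext f
    rw [LinearMap.mem_ker, LinearMap.mem_ker, antisymm_eq_zero_iff]
    exact H2π_eq_zero_iff f
  ((H2π (Rep.trivial ℤ G M)).hom.quotKerEquivOfSurjective hπ).symm ≪≫ₗ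
    Submodule.quotEquivOfEq _ _ hker ≪≫ₗ (antisymm G M).quotKerEquivOfSurjective antisymm_surjective

end HTwo


/-! ### The coefficient sequence -/

section Bockstein

/-- The sequence `0 → ℤ → ℚ → ℚ/ℤ → 0` of trivial `G`-representations. -/
noncomputable def ratSeq (G : Type) [CommGroup G] : ShortComplex (Rep ℤ G) where
  X₁ := Rep.trivial ℤ G ℤ
  X₂ := Rep.trivial ℤ G ℚ
  X₃ := Rep.trivial ℤ G (AddCircle (1 : ℚ))
  f := Rep.ofHom ⟨(Int.castAddHom ℚ).toIntLinearMap, fun _ => rfl⟩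
  g := Rep.ofHom
    ⟨(QuotientAddGroup.mk' (AddSubgroup.zmultiples (1 : ℚ))).toIntLinearMap, fun _ => rfl⟩
  zero := by
    ext
    change ((1 : ℤ) : ℚ) = (0 : AddCircle (1 : ℚ))
    simp

/-- Short exactness of a sequence of representations is checked on elements. The coefficient ring is
general so that instances on `Rep k G` are found by unification rather than unfolded over `ℤ`. -/
lemma shortExact_rep {k G : Type} [CommRing k] [Group G] (S : ShortComplex (Rep.{0} k G))
    (hf : Function.Injective S.f.hom) (hg : Function.Surjective S.g.hom)
    (h : ∀ x, S.g.hom x = 0 → ∃ y, S.f.hom y = x) : S.ShortExact where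
  exact := by
    rw [← ShortComplex.exact_map_iff_of_faithful _ (forget₂ (Rep.{0} k G) (ModuleCat.{0} k)),
      ShortComplex.moduleCat_exact_iff]
    exact h
  mono_f := (Rep.mono_iff_injective _).2 hf
  epi_g := (Rep.epi_iff_surjective _).2 hg

lemma ratSeq_shortExact (G : Type) [CommGroup G] : (ratSeq G).ShortExact := by
  refine shortExact_rep _ (fun a b h => Int.cast_injective (α := ℚ) h)
    (QuotientAddGroup.mk_surjective (s := AddSubgroup.zmultiples (1 : ℚ))) ?_
  intro (x : ℚ) (hx : (x : AddCircle (1 : ℚ)) = 0)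
  obtain ⟨n, hn⟩ := (AddCircle.coe_eq_zero_iff 1).1 hx
  exact ⟨n, (by simpa using hn : (n : ℚ) = x)⟩

end Bockstein

end HThree

/-- For a finite abelian group `G`, there is an isomorphism
`H³(G, ℤ) ≅ Hom(∧² G, ℚ/ℤ)`, where `ℤ` carries the trivial `G`-action, `∧² G` is the
exterior square of `G` as a `ℤ`-module, and `ℚ/ℤ` is realised as `AddCircle (1 : ℚ)`. -/
theorem stmt_14 (G : Type) [CommGroup G] [Fintype G] :
    Nonempty ((groupCohomology (Rep.trivial ℤ G ℤ) 3) ≃+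
      ((⋀[ℤ]^2 (Additive G)) →+ AddCircle (1 : ℚ))) := by
  -- `isZero_rat G 1` and `isZero_rat G 2` concern degrees `2` and `3`.
  have := groupCohomology.isIso_δ_of_isZero (HThree.ratSeq_shortExact G) 2
    (HThree.isZero_rat G 1) (HThree.isZero_rat G 2)
  let e₁ := (asIso (groupCohomology.δ (HThree.ratSeq_shortExact G) 2 3 rfl)).toLinearEquiv
  let e₂ := HThree.h2Equiv G (AddCircle (1 : ℚ))
  let e₃ : ((Additive G) [⋀^Fin 2]→ₗ[ℤ] AddCircle (1 : ℚ)) ≃ₗ[ℤ] _ :=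
    exteriorPower.alternatingMapLinearEquiv
  exact ⟨e₁.symm.toAddEquiv.trans (e₂.toAddEquiv.trans (e₃.toAddEquiv.trans
    (addMonoidHomLequivInt ℤ).symm.toAddEquiv))⟩
end

section
/- Let $G$ be a finite abelian non-cyclic group. Then there exists a finite collection of subgroups $(G_i)_{i \in I}$ of $G$, each of which is a direct sum of two cyclic groups (bicyclic), such that the natural map $\bigoplus_{i \in I} \wedge^2 G_i \to \wedge^2 G$ is an isomorphism. -/
/-!
By the structure theorem, `G ≅ ∏ₖ ℤ/nₖ`. Expanding bilinearly, `∧² G` is the direct sum over pairs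
`k < l` of `ℤ/nₖ ⊗ ℤ/nₗ ≅ ℤ/gcd(nₖ, nₗ)`, and the summand at `(k, l)` is the exterior square of the
coordinate subgroup `ℤ/nₖ × ℤ/nₗ`. The summand vanishes precisely when `nₖ` and `nₗ` are coprime,
which is precisely when this coordinate subgroup is cyclic; so the family of coordinate subgroups
attached to the pairs `k < l` with `nₖ`, `nₗ` not coprime works.

Surjectivity is the bilinear expansion, with `wedge_eq_zero_of_coprime` disposing of the coprime
pairs. For injectivity the coordinate projections onto the subgroups are used: on its own subgroup
such a projection is the identity, and it carries any other coordinate subgroup of the family into a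
cyclic group, whose exterior square is zero. Both halves are in `bijective_toModule_exteriorPowerMap`.
-/

/-- The linear map between `n`-th exterior powers induced by a linear map `f : M →ₗ N`,
obtained by restricting `ExteriorAlgebra.map f`. -/
noncomputable def exteriorPowerMap {R M N : Type*} [CommRing R]
    [AddCommGroup M] [Module R M] [AddCommGroup N] [Module R N]
    (n : ℕ) (f : M →ₗ[R] N) : (⋀[R]^n M) →ₗ[R] (⋀[R]^n N) :=
  (ExteriorAlgebra.map f).toLinearMap.restrict (p := ⋀[R]^n M) (q := ⋀[R]^n N)
    (fun x hx => by
      have hle : Submodule.map (ExteriorAlgebra.map f).toLinearMap (⋀[R]^n M) ≤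
          ⋀[R]^n N := by
        rw [Submodule.map_pow, ExteriorAlgebra.ι_range_map_map]
        exact pow_le_pow_left' LinearMap.map_le_range n
      exact hle ⟨x, hx, rfl⟩)

/-! ### Decomposing exterior squares along retracts -/

section ExteriorSquare

variable {R M N : Type*} [CommRing R] [AddCommGroup M] [Module R M] [AddCommGroup N] [Module R N]

theorem exteriorPowerMap_eq_map (n : ℕ) (f : M →ₗ[R] N) :
    exteriorPowerMap n f = exteriorPower.map n f := by
  apply exteriorPower.linearMap_ext
  ext v
  simp [exteriorPowerMap, ExteriorAlgebra.map_apply_ιMulti, Function.comp_def]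

theorem wedge_eq_zero_of_smul (w : M) {x : Fin 2 → M} (h : ∀ i, ∃ a : R, x i = a • w) :
    exteriorPower.ιMulti R 2 x = 0 := by
  choose a ha using h
  have hx : x = fun i => a i • w := funext ha
  rw [hx, AlternatingMap.map_smul_univ,
    AlternatingMap.map_eq_zero_of_eq _ _ (i := 0) (j := 1) rfl (by decide), smul_zero]

/-- Elements killed by coprime scalars have zero wedge product. -/
theorem wedge_eq_zero_of_coprime {a b : R} (hab : IsCoprime a b) {x : Fin 2 → M}
    (h0 : a • x 0 = 0) (h1 : b • x 1 = 0) : exteriorPower.ιMulti R 2 x = 0 := by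
  have ha : a • exteriorPower.ιMulti R 2 x = 0 := by
    have := (exteriorPower.ιMulti R 2).map_update_smul x 0 a (x 0)
    rw [h0, Function.update_eq_self] at this
    rw [← this]
    exact AlternatingMap.map_coord_zero _ 0 (by simp)
  have hb : b • exteriorPower.ιMulti R 2 x = 0 := by
    have := (exteriorPower.ιMulti R 2).map_update_smul x 1 b (x 1)
    rw [h1, Function.update_eq_self] at this
    rw [← this]
    exact AlternatingMap.map_coord_zero _ 1 (by simp)
  obtain ⟨u, v, huv⟩ := hab
  rw [← one_smul R (exteriorPower.ιMulti R 2 x), ← huv, add_smul, mul_smul, mul_smul, ha, hb]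
  simp

/-- A criterion for the exterior squares of retracts `N i` of `M` to decompose that of `M`: distinct
retracts interact only through cyclic modules, and the wedges of elements taken from the pieces of
some finite decomposition `∑ k, s k = id` of `M` either vanish or come from a single retract. -/
theorem bijective_toModule_exteriorPowerMap {I κ : Type*} [DecidableEq I] [Fintype κ]
    {N : I → Type*} [∀ i, AddCommGroup (N i)] [∀ i, Module R (N i)]
    (inc : ∀ i, N i →ₗ[R] M) (proj : ∀ i, M →ₗ[R] N i)
    (hid : ∀ i, proj i ∘ₗ inc i = LinearMap.id)
    (hcyc : ∀ i j, i ≠ j → ∃ w, ∀ x, ∃ a : R, proj j (inc i x) = a • w)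
    (s : κ → M → M) (hs : ∀ x, ∑ k, s k x = x)
    (hsurj : ∀ (r : Fin 2 → κ) (x : Fin 2 → M),
      exteriorPower.ιMulti R 2 (fun i => s (r i) (x i)) = 0 ∨
        ∃ i, ∀ t, s (r t) (x t) ∈ LinearMap.range (inc i)) :
    Function.Bijective (DirectSum.toModule R I (⋀[R]^2 M)
      (fun i => exteriorPowerMap 2 (inc i))) := by
  simp_rw [exteriorPowerMap_eq_map]
  have hzero : ∀ i j, i ≠ j →
      exteriorPower.map 2 (proj j) ∘ₗ exteriorPower.map 2 (inc i) = 0 := by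
    intro i j hij
    obtain ⟨w, hw⟩ := hcyc i j hij
    rw [← exteriorPower.map_comp]
    apply exteriorPower.linearMap_ext
    ext1 x
    simp only [LinearMap.compAlternatingMap_apply, exteriorPower.map_apply_ιMulti,
      LinearMap.zero_apply]
    exact wedge_eq_zero_of_smul w fun t => hw (x t)
  have hone : ∀ i, exteriorPower.map 2 (proj i) ∘ₗ exteriorPower.map 2 (inc i) =
      LinearMap.id := by
    intro i
    rw [← exteriorPower.map_comp, hid, exteriorPower.map_id]
  constructor
  · rw [injective_iff_map_eq_zero]
    intro z hz
    -- Applying the `j`-th projection to the image of `z` recovers the `j`-th component of `z`.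
    have key : ∀ j, exteriorPower.map 2 (proj j) ∘ₗ DirectSum.toModule R I (⋀[R]^2 M)
        (fun i => exteriorPower.map 2 (inc i)) =
        DirectSum.component R I (fun i => ⋀[R]^2 (N i)) j := by
      intro j
      apply DirectSum.linearMap_ext
      intro i
      refine LinearMap.ext fun y => ?_
      simp only [LinearMap.comp_apply, DirectSum.toModule_lof]
      by_cases hij : i = j
      · subst hij
        rw [DirectSum.component.lof_self]
        exact LinearMap.congr_fun (hone i) y
      · rw [DirectSum.component.of, dif_neg hij]
        exact LinearMap.congr_fun (hzero i j hij) y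
    apply DirectSum.ext_component R
    intro j
    rw [← key j]
    simp [hz]
  · rw [← LinearMap.range_eq_top, eq_top_iff, ← exteriorPower.ιMulti_span, Submodule.span_le]
    rintro _ ⟨x, rfl⟩
    have hx : x = fun t => ∑ k, s k (x t) := funext fun t => (hs (x t)).symm
    have hexp := (exteriorPower.ιMulti R 2 (M := M)).toMultilinearMap.map_sum
      (fun t k => s k (x t))
    rw [← hx] at hexp
    change (exteriorPower.ιMulti R 2).toMultilinearMap x ∈ _
    rw [hexp]
    refine Submodule.sum_mem _ fun r _ => ?_
    rcases hsurj r x with h | ⟨i, hi⟩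
    · exact (congrArg (· ∈ _) h).mpr (Submodule.zero_mem _)
    · choose y hy using hi
      refine ⟨DirectSum.lof R I (fun i => ⋀[R]^2 (N i)) i (exteriorPower.ιMulti R 2 y), ?_⟩
      rw [DirectSum.toModule_lof, exteriorPower.map_apply_ιMulti]
      exact congrArg _ (funext hy)

end ExteriorSquare

/-! ### Coordinate subgroups of a product of cyclic groups -/

section Coordinates

variable {G : Type*} [CommGroup G] {ι : Type*} {n : ι → ℕ}

/-- The coordinate subgroup of `G ≅ ∏ₖ ℤ/nₖ` of the elements supported on `{k, l}`. -/
def coordSubgroup (e : Additive G ≃+ ∀ k, ZMod (n k)) (k l : ι) : Subgroup G where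
  carrier := {g | ∀ m, m ≠ k → m ≠ l → e (Additive.ofMul g) m = 0}
  mul_mem' ha hb m hk hl := by simp [ha m hk hl, hb m hk hl]
  one_mem' m _ _ := by simp
  inv_mem' ha m hk hl := by simp [ha m hk hl]

theorem coord_ext (e : Additive G ≃+ ∀ k, ZMod (n k)) {k l : ι}
    {x y : Additive (coordSubgroup e k l)}
    (h : ∀ m, e (Additive.ofMul (x.toMul : G)) m = e (Additive.ofMul (y.toMul : G)) m) :
    x = y := by
  apply Additive.toMul.injective
  apply Subtype.ext
  apply Additive.ofMul.injective
  apply e.injective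
  exact funext h

variable [DecidableEq ι]

/-- The coordinate projection of `G ≅ ∏ₖ ℤ/nₖ` onto the subgroup supported on `{k, l}`. -/
def coordProj (e : Additive G ≃+ ∀ k, ZMod (n k)) (k l : ι) :
    Additive G →+ Additive (coordSubgroup e k l) where
  toFun x := Additive.ofMul ⟨(e.symm fun m => if m = k ∨ m = l then e x m else 0).toMul,
    fun m hk hl => by simp [hk, hl]⟩
  map_zero' := by
    apply Additive.toMul.injective
    apply Subtype.ext
    apply Additive.ofMul.injective
    apply e.injective
    ext m
    simp
  map_add' x y := by
    apply Additive.toMul.injective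
    apply Subtype.ext
    apply Additive.ofMul.injective
    apply e.injective
    ext m
    by_cases h : m = k ∨ m = l <;> simp [h]

theorem coord_proj (e : Additive G ≃+ ∀ k, ZMod (n k)) (k l : ι) (x : Additive G) (m : ι) :
    e (Additive.ofMul ((coordProj e k l x).toMul : G)) m = if m = k ∨ m = l then e x m else 0 := by
  simp [coordProj]

/-- The coordinate subgroup at two distinct indices `k`, `l` is `ℤ/nₖ × ℤ/nₗ`. -/
theorem nonempty_coordSubgroup_mulEquiv (e : Additive G ≃+ ∀ k, ZMod (n k)) {k l : ι}
    (hkl : k ≠ l) :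
    Nonempty (coordSubgroup e k l ≃* Multiplicative (ZMod (n k) × ZMod (n l))) := by
  let f : Additive (coordSubgroup e k l) →+ ZMod (n k) × ZMod (n l) :=
    { toFun := fun x => (e (Additive.ofMul (x.toMul : G)) k, e (Additive.ofMul (x.toMul : G)) l)
      map_zero' := by simp
      map_add' := fun x y => by simp }
  have hf : Function.Bijective f := by
    constructor
    · intro x y hxy
      have h1 := congrArg Prod.fst hxy
      have h2 := congrArg Prod.snd hxy
      refine coord_ext e fun m => ?_
      by_cases hk : m = k
      · subst hk; exact h1
      by_cases hl : m = l
      · subst hl; exact h2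
      rw [x.toMul.2 m hk hl, y.toMul.2 m hk hl]
    · rintro ⟨a, b⟩
      refine ⟨coordProj e k l (e.symm (Pi.single k a + Pi.single l b)), ?_⟩
      apply Prod.ext
      · change e _ k = a
        rw [coord_proj]
        simp [hkl]
      · change e _ l = b
        rw [coord_proj]
        simp [hkl.symm]
  exact ⟨AddEquiv.toMultiplicativeRight (AddEquiv.ofBijective f hf)⟩

end Coordinates

/-! ### The bicyclic decomposition -/

/-- Let `G` be a finite abelian non-cyclic group. Then there is a finite collection of
bicyclic subgroups `G_i ⊆ G` (non-cyclic subgroups isomorphic to a direct sum of two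
cyclic groups) such that the natural map `⨁ᵢ ∧² G_i → ∧² G` induced by the inclusions
is an isomorphism. -/
theorem stmt_15 (G : Type*) [CommGroup G] [Fintype G] (hG : ¬ IsCyclic G) :
    ∃ (n : ℕ) (Gi : Fin n → Subgroup G),
      (∀ i, ¬ IsCyclic (Gi i) ∧ ∃ c₁ c₂ : ℕ, 0 < c₁ ∧ 0 < c₂ ∧
        Nonempty ((Gi i) ≃* Multiplicative (ZMod c₁ × ZMod c₂))) ∧
      Function.Bijective
        (DirectSum.toModule ℤ (Fin n) (⋀[ℤ]^2 (Additive G))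
          (fun i => exteriorPowerMap 2
            ((MonoidHom.toAdditive (Gi i).subtype).toIntLinearMap))) := by
  classical
  obtain ⟨κ, _, n', hn', ⟨e'⟩⟩ := AddCommGroup.equiv_directSum_zmod_of_finite' (Additive G)
  -- Reindexing by an initial segment of `ℕ` gives a linear order on the coordinates.
  obtain ⟨d, ⟨σ⟩⟩ : ∃ d, Nonempty (Fin d ≃ κ) := ⟨_, ⟨(Fintype.equivFin κ).symm⟩⟩
  obtain ⟨n, hn, ⟨e⟩⟩ : ∃ n : Fin d → ℕ, (∀ k, 0 < n k) ∧
      Nonempty (Additive G ≃+ ∀ k, ZMod (n k)) :=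
    ⟨fun k => n' (σ k), fun k => (hn' _).trans' zero_lt_one,
      ⟨(e'.trans (DirectSum.addEquivProd _)).trans
        (LinearEquiv.piCongrLeft ℤ (fun k => ZMod (n' k)) σ).symm.toAddEquiv⟩⟩
  let I := {P : Fin d × Fin d // P.1 < P.2 ∧ ¬ (n P.1).Coprime (n P.2)}
  let τ : Fin (Fintype.card I) ≃ I := (Fintype.equivFin I).symm
  refine ⟨Fintype.card I, fun i => coordSubgroup e (τ i).1.1 (τ i).1.2, fun i => ?_, ?_⟩
  · obtain ⟨f⟩ := nonempty_coordSubgroup_mulEquiv e (τ i).2.1.ne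
    refine ⟨fun hc => (τ i).2.2 ?_, _, _, hn _, hn _, ⟨f⟩⟩
    have h1 : IsAddCyclic (ZMod (n (τ i).1.1) × ZMod (n (τ i).1.2)) := by
      have := f.isCyclic.mp hc
      exact isCyclic_multiplicative_iff.mp this
    have (k : Fin d) : NeZero (n k) := ⟨(hn k).ne'⟩
    simpa using coprime_card_of_isAddCyclic_prod (ZMod (n (τ i).1.1)) (ZMod (n (τ i).1.2))
  · -- `s k` is the endomorphism keeping only the `k`-th coordinate.
    let s : Fin d → Additive G → Additive G := fun k x => e.symm (Pi.single k (e x k))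
    have hmem : ∀ (i : Fin (Fintype.card I)) (k : Fin d) (x : Additive G),
        (k = (τ i).1.1 ∨ k = (τ i).1.2) →
        s k x ∈ LinearMap.range (MonoidHom.toAdditive
          (coordSubgroup e (τ i).1.1 (τ i).1.2).subtype).toIntLinearMap := by
      intro i k x hk
      refine ⟨Additive.ofMul ⟨(s k x).toMul, fun m h1 h2 => ?_⟩, rfl⟩
      have hmk : m ≠ k := by rintro rfl; tauto
      simp [s, hmk]
    refine bijective_toModule_exteriorPowerMap _
      (fun i => (coordProj e (τ i).1.1 (τ i).1.2).toIntLinearMap) ?_ ?_ s ?_ ?_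
    · intro i
      refine LinearMap.ext fun x => ?_
      refine coord_ext e fun m => ?_
      change e (Additive.ofMul ((coordProj e _ _ (Additive.ofMul (x.toMul : G))).toMul : G)) m =
        e (Additive.ofMul (x.toMul : G)) m
      rw [coord_proj]
      split_ifs with h
      · rfl
      · push Not at h
        exact (x.toMul.2 m h.1 h.2).symm
    · intro i j hij
      -- Two distinct pairs share at most one index.
      obtain ⟨m, hm⟩ : ∃ m, ∀ k, (k = (τ i).1.1 ∨ k = (τ i).1.2) →
          (k = (τ j).1.1 ∨ k = (τ j).1.2) → k = m := by
        have hne : (τ i).1 ≠ (τ j).1 := fun h => hij (τ.injective (Subtype.ext h))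
        have h1 := (τ i).2.1
        have h2 := (τ j).2.1
        rw [Ne, Prod.ext_iff] at hne
        by_cases h : (τ i).1.1 = (τ j).1.1 ∨ (τ i).1.1 = (τ j).1.2
        · exact ⟨(τ i).1.1, fun k => by omega⟩
        · exact ⟨(τ i).1.2, fun k => by omega⟩
      refine ⟨coordProj e _ _ (e.symm (Pi.single m 1)), fun x => ?_⟩
      obtain ⟨a, ha⟩ := ZMod.intCast_surjective (e (Additive.ofMul (x.toMul : G)) m)
      refine ⟨a, ?_⟩
      change coordProj e _ _ (Additive.ofMul (x.toMul : G)) = _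
      rw [← map_zsmul]
      refine coord_ext e fun k => ?_
      rw [coord_proj, coord_proj]
      split_ifs with hk
      · by_cases hkm : k = m
        · subst hkm
          simp [ha]
        · have h0 : e (Additive.ofMul (x.toMul : G)) k = 0 :=
            x.toMul.2 k (fun h => hkm (hm k (Or.inl h) hk)) (fun h => hkm (hm k (Or.inr h) hk))
          simp [h0, hkm]
      · rfl
    · intro x
      apply e.injective
      simp only [s, map_sum, AddEquiv.apply_symm_apply]
      exact Finset.univ_sum_single (e x)
    · intro r x
      by_cases hr : r 0 = r 1
      · left
        refine wedge_eq_zero_of_smul (e.symm (Pi.single (r 0) 1)) fun t => ?_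
        have ht : r t = r 0 := by fin_cases t <;> simp [hr]
        rw [ht]
        obtain ⟨a, ha⟩ := ZMod.intCast_surjective (e (x t) (r 0))
        refine ⟨a, ?_⟩
        simp only [s]
        rw [← ha, ← map_zsmul, ← Pi.single_smul]
        simp
      by_cases hc : (n (r 0)).Coprime (n (r 1))
      · left
        have hkill : ∀ t, ((n (r t) : ℕ) : ℤ) • s (r t) (x t) = 0 := by
          intro t
          simp only [s]
          rw [← map_zsmul, ← Pi.single_smul]
          simp
        exact wedge_eq_zero_of_coprime (Nat.isCoprime_iff_coprime.mpr hc) (hkill 0) (hkill 1)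
      · right
        obtain ⟨i, hi⟩ : ∃ i, ∀ t, r t = (τ i).1.1 ∨ r t = (τ i).1.2 := by
          rcases lt_or_gt_of_ne hr with h | h
          · refine ⟨τ.symm ⟨(r 0, r 1), h, hc⟩, fun t => ?_⟩
            fin_cases t <;> simp
          · refine ⟨τ.symm ⟨(r 1, r 0), h, fun h' => hc h'.symm⟩, fun t => ?_⟩
            fin_cases t <;> simp
        exact ⟨i, fun t => hmem i _ _ (hi t)⟩
end

section
/- Let $f : \mathcal{S}ub(G) \to \mathbb{C}$ be a function on the set of subgroups of a finite abelian group $G$, and define $g(H) = \sum_{J \subseteq H} f(J)$ where the sum is over all subgroups $J$ of $H$. Then $f(G) = \sum_{H \subseteq G} \mu(G/H)\, g(H)$, where $\mu$ is the Möbius function on isomorphism classes of finite abelian groups, determined by: $\mu(A) = 0$ if $A$ has a cyclic subgroup of order $p^2$ for some prime $p$; $\mu(A_1 \times A_2) = \mu(A_1)\mu(A_2)$ when $|A_1|, |A_2|$ are coprime; and $\mu((\mathbb{Z}/p\mathbb{Z})^n) = (-1)^n p^{n(n-1)/2}$. -/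
/-!
Exchanging the two sums turns the right-hand side into `∑ J, f J * ∑ H ≥ J, μ (G ⧸ H)`, and the
inner sum is `∑ L, μ (A ⧸ L)` over all subgroups of `A = G ⧸ J`. So everything rests on
`∑ L, μ (A ⧸ L) = 0` for nontrivial `A` (`sum_eq_zero`).

To see this, fix a maximal subgroup `M` of `A`, of prime index `p`, and group the subgroups `L`
according to `K = L ⊓ M`. Passing to the quotient `B = A ⧸ K`, with `N = M / K` of index `p`, the
part belonging to `K` is the sum of `μ (B ⧸ L)` over the `L` that meet `N` trivially. These are
`⊥` and the complements of `N`.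

* If `N` has no complement then `B` has an element of order divisible by `p ^ 2`, and `μ B = 0`.
* If `N` has a complement `C`, the complements are in bijection with the `p`-torsion `N[p]`, each
  has quotient isomorphic to `N`, and the sum is `μ (N × C) + |N[p]| * μ N`. It vanishes because
  `μ (N × C) = -|N[p]| * μ N` (`mu_prod_prime`): after splitting off the elementary abelian
  `p`-part of `N`, of rank `r`, this is `(r + 1).choose 2 = r + r.choose 2`.

The splitting comes from the fact that if no element order of `A` is divisible by `p ^ 2`, then
`p` does not divide the index of `A[p]`.
-/

open Subgroup

/-- The conditions on `μ` that characterise Delsarte's Möbius function on finite abelian groups. -/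
structure IsDelsarte (μ : (A : Type) → [CommGroup A] → [Finite A] → ℤ) : Prop where
  iso : ∀ (A B : Type) [CommGroup A] [Finite A] [CommGroup B] [Finite B],
      (A ≃* B) → μ A = μ B
  zero : ∀ (A : Type) [CommGroup A] [Finite A],
      (∃ a : A, ∃ p : ℕ, p.Prime ∧ p ^ 2 ∣ orderOf a) → μ A = 0
  mul : ∀ (A B : Type) [CommGroup A] [Finite A] [CommGroup B] [Finite B],
      Nat.Coprime (Nat.card A) (Nat.card B) → μ (A × B) = μ A * μ B
  prime : ∀ (p n : ℕ) [Fact p.Prime],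
      μ (Multiplicative (Fin n → ZMod p)) = (-1) ^ n * (p : ℤ) ^ (n * (n - 1) / 2)

/-- The subgroup `A[p]` of elements with `a ^ p = 1`. -/
abbrev tors (A : Type) [CommGroup A] (p : ℕ) : Subgroup A := (powMonoidHom p : A →* A).ker

lemma mem_tors {A : Type} [CommGroup A] {p : ℕ} {a : A} : a ∈ tors A p ↔ a ^ p = 1 := by
  simp [MonoidHom.mem_ker]

/-- If `p` divided the index, an element of order `p` modulo `A[p]` would have order divisible by
`p ^ 2` in `A`. -/
lemma not_dvd_index_tors (A : Type) [CommGroup A] [Finite A] (p : ℕ) [hp : Fact p.Prime]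
    (h : ∀ a : A, ¬ p ^ 2 ∣ orderOf a) : ¬ p ∣ (tors A p).index := by
  intro hd
  obtain ⟨x, hx⟩ := exists_prime_orderOf_dvd_card' (G := A ⧸ tors A p) p hd
  obtain ⟨a, rfl⟩ := QuotientGroup.mk_surjective x
  have h1 : a ^ p ∈ tors A p := by
    rw [← QuotientGroup.eq_one_iff, QuotientGroup.mk_pow]
    exact orderOf_dvd_iff_pow_eq_one.1 hx.dvd
  have h2 : ¬ a ^ p = 1 := by
    intro h2
    have h3 : a ∈ tors A p := mem_tors.2 h2
    rw [← QuotientGroup.eq_one_iff] at h3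
    rw [h3, orderOf_one] at hx
    exact hp.1.one_lt.ne hx
  refine h a (dvd_of_eq ?_)
  rw [mem_tors, ← pow_mul] at h1
  symm
  refine orderOf_eq_prime_pow (n := 1) (p := p) (by simpa using h2) (by simpa [pow_two] using h1)

/-- An abelian group of exponent dividing a prime `p` is elementary abelian. -/
lemma exists_equiv_elementary (A : Type) [CommGroup A] [Finite A] (p : ℕ) [hp : Fact p.Prime]
    (h : ∀ a : A, a ^ p = 1) :
    ∃ n, Nat.card A = p ^ n ∧ Nonempty (A ≃* Multiplicative (Fin n → ZMod p)) := by
  let _ : Module (ZMod p) (Additive A) := AddCommGroup.zmodModule (n := p)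
    (fun x => h x.toMul)
  have : Finite (Additive A) := ‹Finite A›
  have e := (Module.finBasis (ZMod p) (Additive A)).equivFun
  refine ⟨_, ?_, ⟨MulEquiv.toAdditive.symm
    (e.toAddEquiv.trans (AddEquiv.additiveMultiplicative _).symm)⟩⟩
  have := Nat.card_congr e.toEquiv
  rw [Nat.card_fun, Nat.card_zmod, Nat.card_fin] at this
  exact this

/-- Complementary subgroups of an abelian group decompose it as a direct product. -/
noncomputable def complementEquiv {A : Type} [CommGroup A] {H K : Subgroup A}
    (h : IsComplement' H K) : H × K ≃* A :=
  MulEquiv.ofBijective (H.subtype.coprod K.subtype) h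

/-- The value of `μ` on an elementary abelian group, read off from its order. -/
lemma mu_elementary {μ : (A : Type) → [CommGroup A] → [Finite A] → ℤ}
    (hμ : IsDelsarte μ) (A : Type) [CommGroup A] [Finite A] (p r : ℕ) [hp : Fact p.Prime]
    (h : ∀ a : A, a ^ p = 1) (hc : Nat.card A = p ^ r) :
    μ A = (-1) ^ r * (p : ℤ) ^ (r * (r - 1) / 2) := by
  obtain ⟨n, hn, ⟨e⟩⟩ := exists_equiv_elementary A p h
  obtain rfl : n = r := Nat.pow_right_injective hp.1.two_le (hn.symm.trans hc)
  rw [hμ.iso _ _ e, hμ.prime]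

/-- Multiplying by a group of order `p` multiplies `μ` by `-|N[p]|`. -/
lemma mu_prod_prime {μ : (A : Type) → [CommGroup A] → [Finite A] → ℤ}
    (hμ : IsDelsarte μ) (N C : Type) [CommGroup N] [Finite N] [CommGroup C] [Finite C]
    (p : ℕ) [hp : Fact p.Prime] (hC : Nat.card C = p) :
    μ (N × C) = - Nat.card (tors N p) * μ N := by
  by_cases h : ∃ a : N, ∃ q : ℕ, q.Prime ∧ q ^ 2 ∣ orderOf a
  · rw [hμ.zero N h, hμ.zero (N × C), mul_zero]
    obtain ⟨a, q, hq, hd⟩ := h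
    refine ⟨(a, 1), q, hq, ?_⟩
    rwa [Prod.orderOf_mk, orderOf_one, Nat.lcm_one_right]
  · have hi := not_dvd_index_tors N p (fun a ha => h ⟨a, p, hp.1, ha⟩)
    obtain ⟨r, hr, -⟩ := exists_equiv_elementary (tors N p) p
      (fun a => Subtype.ext (mem_tors.1 a.2))
    have hco : Nat.Coprime p (tors N p).index := (Nat.Prime.coprime_iff_not_dvd hp.1).2 hi
    obtain ⟨Q, hQ⟩ := exists_right_complement'_of_coprime (N := tors N p)
      (by rw [hr]; exact hco.pow_left r)
    have hQc : (tors N p).index = Nat.card Q := hQ.symm.index_eq_card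
    rw [hQc] at hco
    have e := complementEquiv hQ
    have e2 : N × C ≃* (tors N p × C) × Q :=
      (e.symm.prodCongr (MulEquiv.refl C)).trans
        ((MulEquiv.prodAssoc).trans (((MulEquiv.refl _).prodCongr MulEquiv.prodComm).trans
          MulEquiv.prodAssoc.symm))
    rw [hμ.iso _ _ e2, hμ.iso _ _ e.symm, hμ.mul (tors N p × C) Q, hμ.mul (tors N p) Q,
      mu_elementary hμ (tors N p) p r (fun a => Subtype.ext (mem_tors.1 a.2)) hr,
      mu_elementary hμ (tors N p × C) p (r + 1), hr]
    · have : (r + 1) * (r + 1 - 1) / 2 = r + r * (r - 1) / 2 := by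
        rw [← Nat.choose_two_right, ← Nat.choose_two_right, Nat.choose_succ_succ' r 1,
          Nat.choose_one_right]
      rw [this]
      push_cast
      ring
    · rintro ⟨a, c⟩
      refine Prod.ext (Subtype.ext (mem_tors.1 a.2)) ?_
      change c ^ p = 1
      rw [← hC, pow_card_eq_one']
    · rw [Nat.card_prod, hr, hC, pow_succ]
    · rw [hr]; exact hco.pow_left r
    · rw [Nat.card_prod, hr, hC, ← pow_succ]; exact hco.pow_left _

lemma isComplement'_zpowers {B : Type} [CommGroup B] [Finite B] {p : ℕ} [hp : Fact p.Prime]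
    {N : Subgroup B} (hN : N.index = p) {b : B} (hb : b ^ p = 1) (hbN : b ∉ N) :
    IsComplement' N (zpowers b) := by
  have ho : Nat.card (zpowers b) = p := by
    rw [Nat.card_zpowers]
    exact orderOf_eq_prime hb (fun h => hbN (h ▸ N.one_mem))
  refine isComplement'_of_card_mul_and_disjoint ?_ ?_
  · rw [ho, ← hN, card_mul_index]
  · rw [disjoint_comm, disjoint_iff_inf_le]
    have : Fact (Nat.card (zpowers b)).Prime := by rw [ho]; exact hp
    rcases (N.subgroupOf (zpowers b)).eq_bot_or_eq_top_of_prime_card with h | h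
    · rw [subgroupOf_eq_bot, disjoint_comm, disjoint_iff_inf_le] at h
      exact h
    · rw [subgroupOf_eq_top] at h
      exact absurd (h (mem_zpowers b)) hbN

/-- If no element order is divisible by `p ^ 2`, the torsion `B[p]` is not contained in a subgroup
of index `p`, as that would force `p` to divide the index of `B[p]`. -/
lemma exists_compl_gen {B : Type} [CommGroup B] [Finite B] {p : ℕ} [hp : Fact p.Prime]
    {N : Subgroup B} (hN : N.index = p) (h : ∀ a : B, ¬ p ^ 2 ∣ orderOf a) :
    ∃ b : B, b ^ p = 1 ∧ b ∉ N := by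
  by_contra! hcon
  refine not_dvd_index_tors B p h ?_
  have hle : tors B p ≤ N := fun b hb => hcon b (mem_tors.1 hb)
  have hd := index_dvd_of_le hle
  rwa [hN] at hd

/-- A subgroup meeting a subgroup of prime index trivially is trivial or a complement. -/
lemma inf_eq_bot_cases {B : Type} [CommGroup B] [Finite B] {p : ℕ} [hp : Fact p.Prime]
    {N : Subgroup B} (hN : N.index = p) (L : Subgroup B) :
    L ⊓ N = ⊥ ↔ L = ⊥ ∨ IsComplement' N L := by
  constructor
  · intro h
    by_cases hL : L = ⊥
    · exact Or.inl hL
    right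
    refine isComplement'_of_card_mul_and_disjoint ?_ (disjoint_iff.2 (by rwa [inf_comm]))
    have h1 : N.relIndex L = Nat.card L := by
      rw [← inf_relIndex_right, inf_comm, h, relIndex_bot_left]
    have h2 : N.relIndex L ∣ p := hN ▸ relIndex_dvd_index_of_normal N L
    rw [h1] at h2
    rcases (Nat.dvd_prime hp.1).1 h2 with h3 | h3
    · exact absurd (Subgroup.card_eq_one.1 h3) hL
    · rw [h3, ← hN, card_mul_index]
  · rintro (rfl | h)
    · simp
    · rw [inf_comm]; exact h.disjoint.eq_bot

/-- Given one element `b` of order `p` outside `N`, the complements of `N` are the subgroups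
generated by `b * n` for `n ∈ N[p]`, without repetition. -/
lemma card_complements {B : Type} [CommGroup B] [Finite B] {p : ℕ} [hp : Fact p.Prime]
    {N : Subgroup B} (hN : N.index = p) {b : B} (hb : b ^ p = 1) (hbN : b ∉ N) :
    Nat.card {L : Subgroup B // IsComplement' N L} = Nat.card (tors N p) := by
  have hpow (n : tors N p) : ((n : N) : B) ^ p = 1 := congrArg Subtype.val (mem_tors.1 n.2)
  have key (n : tors N p) : IsComplement' N (zpowers (b * ((n : N) : B))) := by
    refine isComplement'_zpowers hN ?_ ?_
    · rw [mul_pow, hb, hpow, one_mul]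
    · rwa [N.mul_mem_cancel_right (n : N).2]
  symm
  refine Nat.card_congr (Equiv.ofBijective (fun n => ⟨zpowers (b * ((n : N) : B)), key n⟩) ⟨?_, ?_⟩)
  · intro n m hnm
    have hz : zpowers (b * ((n : N) : B)) = zpowers (b * ((m : N) : B)) :=
      congrArg Subtype.val hnm
    have h1 : b * ((n : N) : B) ∈ zpowers (b * ((m : N) : B)) := hz ▸ mem_zpowers _
    have h2 := div_mem h1 (mem_zpowers (b * ((m : N) : B)))
    rw [mul_div_mul_left_eq_div] at h2
    have h3 := disjoint_def.1 (key m).disjoint (div_mem (n : N).2 (m : N).2) h2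
    exact Subtype.ext (Subtype.ext (div_eq_one.1 h3))
  · rintro ⟨L, hL⟩
    obtain ⟨⟨x, y⟩, hxy⟩ := hL.2 b
    have hyc : Nat.card L = p := by rw [← hN, hL.symm.index_eq_card]
    have hy : (y : B) ^ p = 1 := by
      have : (⟨y, y.2⟩ : L) ^ p = 1 := by rw [← hyc, pow_card_eq_one']
      exact congrArg Subtype.val this
    -- `b = x * y`, so `y = b * x⁻¹` is a generator of `L` of the required form
    have hyb : (y : B) = b * ((x⁻¹ : N) : B) := by
      rw [← hxy]; simp
    have hx : (x⁻¹ : N) ∈ tors N p := by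
      rw [mem_tors]
      apply Subtype.ext
      have := hy
      rw [hyb, mul_pow, hb, one_mul] at this
      simpa using this
    refine ⟨⟨x⁻¹, hx⟩, Subtype.ext ?_⟩
    change zpowers (b * ((x⁻¹ : N) : B)) = L
    rw [← hyb]
    refine Subgroup.eq_of_le_of_card_ge (by simp) ?_
    rw [hyc, Nat.card_zpowers, orderOf_eq_prime hy]
    intro h
    rw [h] at hyb
    exact hbN ((N.mul_mem_cancel_right (x⁻¹ : N).2).1 (hyb ▸ N.one_mem))

open Classical in
/-- The contribution of `K` to the sum, seen in `B = A ⧸ K`: for `N` of prime index, the sum of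
`μ (B ⧸ L)` over the `L` meeting `N` trivially vanishes. -/
lemma sum_inf_eq_bot {μ : (A : Type) → [CommGroup A] → [Finite A] → ℤ}
    (hμ : IsDelsarte μ) {B : Type} [CommGroup B] [Finite B] [Fintype (Subgroup B)]
    {p : ℕ} [hp : Fact p.Prime] {N : Subgroup B} (hN : N.index = p) :
    ∑ L : Subgroup B with L ⊓ N = ⊥, μ (B ⧸ L) = 0 := by
  have hdis : Disjoint ({⊥} : Finset (Subgroup B))
      (Finset.univ.filter fun L : Subgroup B => IsComplement' N L) := by
    rw [Finset.disjoint_singleton_left, Finset.mem_filter_univ, isComplement'_bot_right]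
    rintro rfl
    rw [index_top] at hN
    exact hp.1.one_lt.ne hN
  have hset : (Finset.univ.filter fun L : Subgroup B => L ⊓ N = ⊥)
      = {⊥} ∪ Finset.univ.filter fun L : Subgroup B => IsComplement' N L := by
    ext L
    simp [inf_eq_bot_cases hN]
  rw [hset, Finset.sum_union hdis, Finset.sum_singleton,
    hμ.iso _ _ (QuotientGroup.quotientBot (G := B))]
  rw [Finset.sum_congr rfl (g := fun _ => μ N) (fun L hL =>
    hμ.iso _ _ ((Finset.mem_filter_univ _).1 hL).QuotientMulEquiv)]
  rw [Finset.sum_const, nsmul_eq_mul, ← Fintype.card_subtype, ← Nat.card_eq_fintype_card]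
  by_cases hex : ∃ b : B, b ^ p = 1 ∧ b ∉ N
  · obtain ⟨b, hb, hbN⟩ := hex
    have hc := isComplement'_zpowers hN hb hbN
    rw [card_complements hN hb hbN, hμ.iso _ _ (complementEquiv hc).symm,
      mu_prod_prime hμ N (zpowers b) p (by rw [← hN, hc.symm.index_eq_card])]
    ring
  · have : IsEmpty {L : Subgroup B // IsComplement' N L} := by
      refine ⟨fun ⟨L, hL⟩ => ?_⟩
      have hLc : Nat.card L = p := by rw [← hN, hL.symm.index_eq_card]
      refine hex ?_
      have : Nontrivial L := Finite.one_lt_card_iff_nontrivial.1 (hLc ▸ hp.1.one_lt)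
      obtain ⟨b, hb⟩ := exists_ne (1 : L)
      refine ⟨b, ?_, fun hbN => hb (Subtype.ext (disjoint_def.1 hL.disjoint hbN b.2))⟩
      have : b ^ p = 1 := by rw [← hLc, pow_card_eq_one']
      exact congrArg Subtype.val this
    have h0 : μ B = 0 := by
      refine hμ.zero B ?_
      by_contra! h
      exact hex (exists_compl_gen hN fun a => h a p hp.1)
    rw [h0, Nat.card_of_isEmpty]
    simp

open Classical in
/-- Correspondence theorem for sums over the subgroups above `K`. -/
lemma sum_ge {μ : (A : Type) → [CommGroup A] → [Finite A] → ℤ}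
    (hμ : IsDelsarte μ) {A : Type} [CommGroup A] [Finite A] [Fintype (Subgroup A)]
    (K : Subgroup A) [Fintype (Subgroup (A ⧸ K))] (P : Subgroup A → Prop) (hP : ∀ H, P H → K ≤ H) :
    ∑ H : Subgroup A with P H, μ (A ⧸ H)
      = ∑ L : Subgroup (A ⧸ K) with P (L.comap (QuotientGroup.mk' K)), μ ((A ⧸ K) ⧸ L) := by
  have hcm (H : Subgroup A) (h : K ≤ H) :
      (H.map (QuotientGroup.mk' K)).comap (QuotientGroup.mk' K) = H := by
    rw [comap_map_eq, QuotientGroup.ker_mk', sup_eq_left.2 h]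
  refine Finset.sum_bij' (fun H _ => H.map (QuotientGroup.mk' K))
    (fun L _ => L.comap (QuotientGroup.mk' K)) ?_ ?_ ?_ ?_ ?_
  · intro H hH
    rw [Finset.mem_filter_univ] at hH ⊢
    rwa [hcm H (hP H hH)]
  · intro L hL
    rw [Finset.mem_filter_univ] at hL ⊢
    exact hL
  · intro H hH
    rw [Finset.mem_filter_univ] at hH
    exact hcm H (hP H hH)
  · intro L _
    exact map_comap_eq_self_of_surjective (QuotientGroup.mk'_surjective K) L
  · intro H hH
    rw [Finset.mem_filter_univ] at hH
    exact (hμ.iso _ _ (QuotientGroup.quotientQuotientEquivQuotient K H (hP H hH))).symm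

lemma exists_prime_index (A : Type) [CommGroup A] [Finite A] [Nontrivial A] :
    ∃ M : Subgroup A, M.index.Prime := by
  obtain ⟨M, hM, -⟩ := (eq_top_or_exists_le_coatom (⊥ : Subgroup A)).resolve_left bot_ne_top
  have hnt : Nontrivial (A ⧸ M) := QuotientGroup.nontrivial_iff.2 hM.1
  have : IsSimpleGroup (A ⧸ M) := by
    refine ⟨fun L _ => ?_⟩
    have hs := QuotientGroup.mk'_surjective M
    have hle : M ≤ L.comap (QuotientGroup.mk' M) := by
      simpa using MonoidHom.ker_le_comap (QuotientGroup.mk' M) L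
    rcases hle.eq_or_lt with h | h
    · left
      rw [← map_comap_eq_self_of_surjective hs L, ← h, QuotientGroup.map_mk'_self]
    · right
      rw [← map_comap_eq_self_of_surjective hs L, hM.2 _ h, map_top_of_surjective _ hs]
  exact ⟨M, IsSimpleGroup.prime_card (α := A ⧸ M)⟩

open Classical in
lemma sum_eq_zero {μ : (A : Type) → [CommGroup A] → [Finite A] → ℤ}
    (hμ : IsDelsarte μ) {A : Type} [CommGroup A] [Finite A] [Nontrivial A]
    [Fintype (Subgroup A)] : ∑ L : Subgroup A, μ (A ⧸ L) = 0 := by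
  obtain ⟨M, hM⟩ := exists_prime_index A
  rw [← Finset.sum_fiberwise_of_maps_to (s := Finset.univ) (g := fun L => L ⊓ M)
    (t := Finset.univ.filter fun K : Subgroup A => K ≤ M) (by simp)]
  refine Finset.sum_eq_zero fun K hK => ?_
  rw [Finset.mem_filter_univ] at hK
  have : Fintype (Subgroup (A ⧸ K)) := Fintype.ofFinite _
  have : Fact M.index.Prime := ⟨hM⟩
  have hs := QuotientGroup.mk'_surjective K
  rw [sum_ge hμ K (fun L => L ⊓ M = K) (fun H h => h ▸ inf_le_left)]
  have hMc : (M.map (QuotientGroup.mk' K)).comap (QuotientGroup.mk' K) = M := by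
    rw [comap_map_eq, QuotientGroup.ker_mk', sup_eq_left.2 hK]
  have hN : (M.map (QuotientGroup.mk' K)).index = M.index := by
    rw [← index_comap_of_surjective _ hs, hMc]
  rw [← sum_inf_eq_bot hμ hN]
  refine Finset.sum_congr (Finset.filter_congr fun L _ => ?_) fun _ _ => rfl
  rw [← (comap_injective hs).eq_iff, comap_inf, hMc, MonoidHom.comap_bot, QuotientGroup.ker_mk']

open Classical in
/-- The sum over the interval `[J, ⊤]` that Möbius inversion needs. -/
lemma sum_ge_eq {μ : (A : Type) → [CommGroup A] → [Finite A] → ℤ}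
    (hμ : IsDelsarte μ) {G : Type} [CommGroup G] [Finite G] [Fintype (Subgroup G)]
    (J : Subgroup G) :
    ∑ H : Subgroup G with J ≤ H, μ (G ⧸ H) = if J = ⊤ then 1 else 0 := by
  split_ifs with h
  · subst h
    have hset : (Finset.univ.filter fun H : Subgroup G => ⊤ ≤ H) = {⊤} := by
      ext H; simp
    rw [hset, Finset.sum_singleton]
    have : Fact (Nat.Prime 2) := ⟨Nat.prime_two⟩
    have hs : Subsingleton (G ⧸ (⊤ : Subgroup G)) := QuotientGroup.subsingleton_quotient_top
    rw [mu_elementary hμ _ 2 0 (fun a => Subsingleton.elim _ _) (by simp)]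
    simp
  · have : Fintype (Subgroup (G ⧸ J)) := Fintype.ofFinite _
    have : Nontrivial (G ⧸ J) := QuotientGroup.nontrivial_iff.2 h
    rw [← sum_eq_zero hμ (A := G ⧸ J)]
    have hu := sum_ge hμ J (fun H => J ≤ H) (fun _ h => h)
    rw [Finset.filter_true_of_mem (s := (Finset.univ : Finset (Subgroup (G ⧸ J))))
      fun L _ => by simpa using MonoidHom.ker_le_comap (QuotientGroup.mk' J) L] at hu
    convert hu

/-- Möbius inversion for finite abelian groups (Delsarte): if `μ` is the Möbius function
on (isomorphism classes of) finite abelian groups — characterised by: `μ(A) = 0` if `A`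
has a cyclic subgroup of order `p²` for some prime `p`; `μ(A₁ × A₂) = μ(A₁)μ(A₂)` when
`|A₁|, |A₂|` are coprime; and `μ((ℤ/pℤ)ⁿ) = (-1)ⁿ p^{n(n-1)/2}` — and if
`g(H) = ∑_{J ⊆ H} f(J)`, then `f(G) = ∑_{H ⊆ G} μ(G/H) g(H)`. -/
theorem stmt_16
    (μ : (A : Type) → [inst : CommGroup A] → [inst2 : Finite A] → ℤ)
    (hiso : ∀ (A B : Type) [CommGroup A] [Finite A] [CommGroup B] [Finite B],
      (A ≃* B) → μ A = μ B)
    (hzero : ∀ (A : Type) [CommGroup A] [Finite A],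
      (∃ a : A, ∃ p : ℕ, p.Prime ∧ p ^ 2 ∣ orderOf a) → μ A = 0)
    (hmul : ∀ (A B : Type) [CommGroup A] [Finite A] [CommGroup B] [Finite B],
      Nat.Coprime (Nat.card A) (Nat.card B) → μ (A × B) = μ A * μ B)
    (hprime : ∀ (p n : ℕ) [Fact p.Prime],
      μ (Multiplicative (Fin n → ZMod p)) = (-1) ^ n * (p : ℤ) ^ (n * (n - 1) / 2))
    (G : Type) [CommGroup G] [Finite G] (f : Subgroup G → ℤ) :
    f ⊤ = ∑ᶠ H : Subgroup G, μ (G ⧸ H) * ∑ᶠ (J : Subgroup G) (_ : J ≤ H), f J := by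
  classical
  have hμ : IsDelsarte μ := ⟨hiso, hzero, hmul, hprime⟩
  have : Fintype (Subgroup G) := Fintype.ofFinite _
  rw [finsum_eq_sum_of_fintype]
  have hg (H : Subgroup G) :
      ∑ᶠ (J : Subgroup G) (_ : J ≤ H), f J = ∑ J : Subgroup G, if J ≤ H then f J else 0 := by
    rw [finsum_eq_sum_of_fintype]
    exact Finset.sum_congr rfl fun J _ => finsum_eq_if
  simp_rw [hg, Finset.mul_sum]
  rw [Finset.sum_comm]
  have hJ (J : Subgroup G) : ∑ H : Subgroup G, μ (G ⧸ H) * (if J ≤ H then f J else 0)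
      = if J = ⊤ then f J else 0 := by
    simp_rw [mul_ite, mul_zero]
    rw [← Finset.sum_filter, ← Finset.sum_mul, sum_ge_eq hμ J, ite_mul, one_mul, zero_mul]
  simp_rw [hJ]
  simp
end
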